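/- arXiv:2509.07926 — 2 statements merged into one kernel-verified Lean document; each statement's English description precedes it below -/
import Mathlib

section
/- Let m and k be positive integers with k ≥ 3. Write D(mk,k) = {d_0 < d_1 < ⋯ < d_j} (so j ≥ 0) and set d_{-1} := 0. Then mk − m ≥ b(mk,k) ≥ mk − Σ_{i=0}^{j} (d_i − d_{i-1})(m − d_i + 1). -/
/-!
Identify `ZMod (m * k)` with the integers `q * k + r`, where `q < m` and `r < k`.

Upper bound: `ZMod (m * k)` is the disjoint union of the `m` progressions
`t, t + m, …, t + (k - 1) m` with `t < m`, and a progression-free set misses a point of each.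

Lower bound: for `e i ≤ r < e (i + 1)`, `i ≤ j`, delete from the residue class of `r` modulo `k` all
elements but those with `q < e (i + 1) - 1`; at most
`∑ (e (i + 1) - e i) * (m - e (i + 1) + 1)` elements are deleted. A `k`-term progression whose
difference `d` satisfies `gcd (d, k) = g` meets each class modulo `k` congruent to its first term
modulo `g` in exactly `g` points. One of those classes is that of some `r < g`, and as `g` is a
value `e (i + 1)`, at most `g - 1` elements of the class of `r` were kept. Hence the remaining set
is progression-free.
-/

/-- `A` is a `k`-term cyclic arithmetic progression mod `N` with common difference `d`:
it is a `k`-element subset of `ZMod N` whose elements are `t, t+d, …, t+(k-1)d`. -/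
def IsAPWith (N k : ℕ) (A : Finset (ZMod N)) (d : ZMod N) : Prop :=
  A.card = k ∧ ∃ t : ZMod N, A = (Finset.range k).image (fun i : ℕ => t + (i : ZMod N) * d)

/-- `A` is a `k`-term cyclic arithmetic progression mod `N`. -/
def IsAP (N k : ℕ) (A : Finset (ZMod N)) : Prop :=
  ∃ d : ZMod N, IsAPWith N k A d

/-- `D(N,k)`: the set of values `gcd(d,k)` where `d` ranges over all `d ∈ {1,…,N-1}` that are
a common difference of some `k`-term cyclic arithmetic progression mod `N`. -/
def Ddiff (N k : ℕ) : Set ℕ :=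
  {g | ∃ d : ℕ, 1 ≤ d ∧ d ≤ N - 1 ∧
    (∃ A : Finset (ZMod N), IsAPWith N k A (d : ZMod N)) ∧ g = Nat.gcd d k}

/-- `b(N,k)`: the maximum size of a subset of `ZMod N` containing no `k`-term cyclic
arithmetic progression mod `N`. -/
noncomputable def bNum (N k : ℕ) : ℕ :=
  sSup {n | ∃ B : Finset (ZMod N), B.card = n ∧ ∀ A ⊆ B, ¬ IsAP N k A}

/-- `χ(N,k)`: the minimum number of parts needed to partition `ZMod N` into subsets none of
which contains a `k`-term cyclic arithmetic progression mod `N` (phrased via colorings). -/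
noncomputable def chiNum (N k : ℕ) : ℕ :=
  sInf {r | ∃ c : ZMod N → Fin r, ∀ A : Finset (ZMod N), IsAP N k A → ¬ ∃ i, ∀ x ∈ A, c x = i}

/-- The set deleted from `ZMod (m * k)` in the lower bound. -/
def removed (m k j : ℕ) (e : ℕ → ℕ) : Finset (ZMod (m * k)) :=
  (Finset.range (j + 1)).biUnion fun i =>
    (Finset.Ico (e i) (e (i + 1)) ×ˢ Finset.Ico (e (i + 1) - 1) m).image
      fun p : ℕ × ℕ => ((p.2 * k + p.1 : ℕ) : ZMod (m * k))

lemma card_removed_le (m k j : ℕ) (e : ℕ → ℕ) :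
    (removed m k j e).card ≤
      ∑ i ∈ Finset.range (j + 1), (e (i + 1) - e i) * (m - e (i + 1) + 1) := by
  refine Finset.card_biUnion_le.trans (Finset.sum_le_sum fun i _ => ?_)
  refine Finset.card_image_le.trans ?_
  rw [Finset.card_product, Nat.card_Ico, Nat.card_Ico]
  exact Nat.mul_le_mul_left _ (by omega)

/-- A sequence `T + n δ` contains a term congruent modulo `k` to the residue of `T` modulo
`gcd (δ, k)`. -/
lemma exists_mod_eq (T δ k : ℕ) (hk : 0 < k) :
    ∃ n, n < k / Nat.gcd δ k ∧ (T + n * δ) % k = T % Nat.gcd δ k := by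
  set g := Nat.gcd δ k with hg
  have hgpos : 0 < g := Nat.gcd_pos_of_pos_right _ hk
  obtain ⟨a, ha⟩ : g ∣ δ := Nat.gcd_dvd_left _ _
  obtain ⟨b, hb⟩ : g ∣ k := Nat.gcd_dvd_right _ _
  have hbpos : 0 < b := Nat.pos_of_ne_zero fun h => by simp [h] at hb; omega
  have hkb : k / g = b := by rw [hb]; exact Nat.mul_div_cancel_left _ hgpos
  have hcop : Nat.Coprime a b := by
    have := Nat.coprime_div_gcd_div_gcd (m := δ) (n := k) (hg ▸ hgpos)
    rw [← hg, hkb] at this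
    rwa [ha, Nat.mul_div_cancel_left _ hgpos] at this
  have : NeZero b := ⟨hbpos.ne'⟩
  have hu : (a : ZMod b) * (a : ZMod b)⁻¹ = 1 := ZMod.coe_mul_inv_eq_one a hcop
  -- `n` solves `T / g + n * (δ / g) = 0` modulo `k / g`
  refine ⟨(-(T / g : ℕ) * (a : ZMod b)⁻¹ : ZMod b).val, hkb.symm ▸ ZMod.val_lt (n := b) _, ?_⟩
  set n := (-(T / g : ℕ) * (a : ZMod b)⁻¹ : ZMod b).val with hn
  have hdvd : b ∣ T / g + n * a := by
    rw [← ZMod.natCast_eq_zero_iff]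
    push_cast
    rw [hn, ZMod.natCast_zmod_val, mul_assoc, mul_comm _ (a : ZMod b), hu]
    ring
  obtain ⟨c, hc⟩ := hdvd
  have h1 : T + n * δ = T % g + k * c := by
    calc T + n * δ = (T % g + g * (T / g)) + n * δ := by rw [Nat.mod_add_div]
      _ = T % g + g * (T / g + n * a) := by rw [ha]; ring
      _ = T % g + k * c := by rw [hc, hb]; ring
  rw [h1, Nat.add_mul_mod_self_left, Nat.mod_eq_of_lt]
  exact (Nat.mod_lt _ hgpos).trans_le (Nat.le_of_dvd hk (Nat.gcd_dvd_right _ _))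

lemma removed_hits (m k : ℕ) (hm : 0 < m) (hk : 3 ≤ k) (j : ℕ) (e : ℕ → ℕ)
    (he0 : e 0 = 0) (hmono : ∀ i ≤ j, e i < e (i + 1))
    (hD : Ddiff (m * k) k = {x | ∃ i, 1 ≤ i ∧ i ≤ j + 1 ∧ x = e i})
    (A : Finset (ZMod (m * k))) (hA : IsAP (m * k) k A) : ∃ x ∈ A, x ∈ removed m k j e := by
  have hkpos : 0 < k := by omega
  have : NeZero (m * k) := ⟨(Nat.mul_pos hm hkpos).ne'⟩
  obtain ⟨d, hcard, t, rfl⟩ := hA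
  have hinj : Set.InjOn (fun i : ℕ => t + (i : ZMod (m * k)) * d) (Finset.range k) := by
    apply Finset.card_image_iff.mp
    rw [hcard, Finset.card_range]
  have hd : d ≠ 0 := by
    rintro rfl
    have := hinj (x₁ := 0) (x₂ := 1) (by simp; omega) (by simp; omega) (by simp)
    omega
  set δ := d.val with hδ
  set T := t.val with hT
  have hδd : (δ : ZMod (m * k)) = d := ZMod.natCast_zmod_val d
  have hTt : (T : ZMod (m * k)) = t := ZMod.natCast_zmod_val t
  set g := Nat.gcd δ k with hg
  have hgpos : 0 < g := Nat.gcd_pos_of_pos_right _ hkpos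
  have hgk : g ∣ k := Nat.gcd_dvd_right _ _
  have hgD : g ∈ Ddiff (m * k) k := by
    refine ⟨δ, ?_, ?_, ⟨_, hcard, t, by rw [hδd]⟩, rfl⟩
    · exact Nat.pos_of_ne_zero fun h => hd ((ZMod.val_eq_zero d).mp h)
    · have := ZMod.val_lt d
      omega
  rw [hD] at hgD
  obtain ⟨i, hi1, hij, hgi⟩ := hgD
  have hle : ∀ b ≤ j + 1, ∀ a ≤ b, e a ≤ e b := by
    intro b
    induction b with
    | zero => intro _ a ha; rw [Nat.le_zero.mp ha]
    | succ b ih =>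
      intro hb a ha
      rcases Nat.lt_or_ge b a with h | h
      · rw [show a = b + 1 by omega]
      · exact (ih (by omega) a h).trans (hmono b (by omega)).le
  have hrg : T % g < g := Nat.mod_lt _ hgpos
  have hrk : T % g < k := hrg.trans_le (Nat.le_of_dvd hkpos hgk)
  -- the block `[e i', e (i' + 1))` containing the residue `T % g`
  have hex : ∃ a, T % g < e (a + 1) := ⟨i - 1, by rwa [Nat.sub_add_cancel hi1, ← hgi]⟩
  obtain ⟨i', hi'j, hlo, hhi, hi'g⟩ :
      ∃ a ≤ j, e a ≤ T % g ∧ T % g < e (a + 1) ∧ e (a + 1) ≤ g := by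
    have hfi : Nat.find hex ≤ i - 1 :=
      Nat.find_min' hex (by rwa [Nat.sub_add_cancel hi1, ← hgi])
    refine ⟨Nat.find hex, by omega, ?_, Nat.find_spec hex, ?_⟩
    · rcases h : Nat.find hex with _ | c
      · omega
      · exact not_lt.mp (Nat.find_min hex (m := c) (by omega))
    · exact (hle i hij _ (by omega)).trans_eq hgi.symm
  obtain ⟨n₀, hn₀, hmod⟩ := exists_mod_eq T δ k hkpos
  rw [← hg] at hn₀ hmod
  by_contra hcon
  push Not at hcon
  -- the `g` terms of the progression congruent to `T % g` modulo `k`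
  let ν : ℕ → ℕ := fun l => n₀ + l * (k / g)
  let x : ℕ → ZMod (m * k) := fun l => t + (ν l : ZMod (m * k)) * d
  have hν : ∀ l < g, ν l < k := by
    intro l hl
    calc ν l < (l + 1) * (k / g) := by simp only [ν]; rw [add_mul]; omega
      _ ≤ g * (k / g) := Nat.mul_le_mul_right _ hl
      _ = k := Nat.mul_div_cancel' hgk
  have hxmod : ∀ l, (x l).val % k = T % g := by
    intro l
    have hx : x l = ((T + ν l * δ : ℕ) : ZMod (m * k)) := by
      simp only [x]; push_cast; rw [hTt, hδd]
    rw [hx, ZMod.val_natCast, Nat.mod_mod_of_dvd _ (Dvd.intro_left m rfl), ← hmod]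
    obtain ⟨a, ha⟩ : g ∣ δ := Nat.gcd_dvd_left _ _
    have : T + ν l * δ = T + n₀ * δ + k * (l * a) := by
      conv_rhs => rw [← Nat.mul_div_cancel' hgk]
      simp only [ν]
      rw [ha]
      ring
    rw [this, Nat.add_mul_mod_self_left]
  have hxq : ∀ l < g, (x l).val / k < e (i' + 1) - 1 := by
    intro l hl
    by_contra hge
    apply hcon (x l) (Finset.mem_image.mpr ⟨ν l, Finset.mem_range.mpr (hν l hl), rfl⟩)
    refine Finset.mem_biUnion.mpr ⟨i', Finset.mem_range.mpr (by omega), ?_⟩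
    refine Finset.mem_image.mpr ⟨(T % g, (x l).val / k), ?_, ?_⟩
    · have : (x l).val / k < m := Nat.div_lt_of_lt_mul 
        ((ZMod.val_lt (x l)).trans_eq (mul_comm m k))
      simp only [Finset.mem_product, Finset.mem_Ico]
      omega
    · simp only
      rw [← hxmod l, Nat.div_add_mod', ZMod.natCast_zmod_val]
  -- pigeonhole: `g` terms, but fewer than `g` available quotients
  obtain ⟨l₁, h₁, l₂, h₂, hne, heq⟩ := Finset.exists_ne_map_eq_of_card_lt_of_maps_to
    (s := Finset.range g) (t := Finset.range (g - 1)) (f := fun l => (x l).val / k)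
    (by simp only [Finset.card_range]; omega)
    (fun l hl => by
      have := hxq l (Finset.mem_range.mp hl)
      simp only [Finset.coe_range, Set.mem_Iio]
      omega)
  rw [Finset.mem_range] at h₁ h₂
  have hval : (x l₁).val = (x l₂).val := by
    rw [← Nat.div_add_mod' (x l₁).val k, ← Nat.div_add_mod' (x l₂).val k, hxmod, hxmod, heq]
  have hνeq : ν l₁ = ν l₂ := hinj (by simpa using hν l₁ h₁) (by simpa using hν l₂ h₂)
    (ZMod.val_injective _ hval)
  have hpos : 0 < k / g := Nat.div_pos (Nat.le_of_dvd hkpos hgk) hgpos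
  exact hne (Nat.eq_of_mul_eq_mul_right hpos (Nat.add_left_cancel hνeq))

lemma card_le_of_apFree (m k : ℕ) (hm : 0 < m) (hk : 3 ≤ k) (B : Finset (ZMod (m * k)))
    (hB : ∀ A ⊆ B, ¬ IsAP (m * k) k A) : B.card ≤ m * k - m := by
  have hkpos : 0 < k := by omega
  have : NeZero (m * k) := ⟨(Nat.mul_pos hm hkpos).ne'⟩
  have hlt : ∀ t < m, ∀ i < k, t + i * m < m * k := by
    intro t ht i hi
    calc t + i * m < (i + 1) * m := by rw [add_mul]; omega
      _ ≤ k * m := Nat.mul_le_mul_right _ hi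
      _ = m * k := mul_comm _ _
  have hcast : ∀ t < m, ∀ i < k, ∀ t' < m, ∀ i' < k,
      ((t + i * m : ℕ) : ZMod (m * k)) = ((t' + i' * m : ℕ) : ZMod (m * k)) →
      t + i * m = t' + i' * m := by
    intro t ht i hi t' ht' i' hi' h
    have h2 := congrArg ZMod.val h
    rwa [ZMod.val_cast_of_lt (hlt t ht i hi), ZMod.val_cast_of_lt (hlt t' ht' i' hi')] at h2
  have hmiss : ∀ t < m, ∃ i < k, ((t + i * m : ℕ) : ZMod (m * k)) ∉ B := by
    intro t ht
    by_contra hcon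
    push Not at hcon
    refine hB ((Finset.range k).image
      (fun i : ℕ => (t : ZMod (m * k)) + (i : ZMod (m * k)) * (m : ZMod (m * k)))) ?_
      ⟨m, ?_, t, rfl⟩
    · intro y hy
      obtain ⟨i, hi, rfl⟩ := Finset.mem_image.mp hy
      simpa using hcon i (Finset.mem_range.mp hi)
    · rw [Finset.card_image_of_injOn, Finset.card_range]
      intro i hi i' hi' h
      have := hcast t ht i (by simpa using hi) t ht i' (by simpa using hi') (by simpa using h)
      exact Nat.eq_of_mul_eq_mul_right hm (Nat.add_left_cancel this)
  choose! f hf hfB using hmiss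
  have hcompl : m ≤ Bᶜ.card := by
    have := Finset.card_le_card_of_injOn (s := Finset.range m) (t := Bᶜ)
      (fun t => ((t + f t * m : ℕ) : ZMod (m * k)))
      (fun t ht => by
        have := hfB t (by simpa using ht)
        simpa using this)
      (fun t ht t' ht' h => by
        have ht := Finset.mem_range.mp ht
        have ht' := Finset.mem_range.mp ht'
        have h2 := congrArg (· % m) (hcast t ht _ (hf t ht) t' ht' _ (hf t' ht') h)
        simpa [Nat.mod_eq_of_lt ht, Nat.mod_eq_of_lt ht'] using h2)
    simpa using this
  have := Finset.card_compl_add_card B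
  rw [ZMod.card] at this
  omega

theorem stmt_0 (m k : ℕ) (hm : 0 < m) (hk : 3 ≤ k) (j : ℕ) (e : ℕ → ℕ)
    (he0 : e 0 = 0)
    (hmono : ∀ i ≤ j, e i < e (i + 1))
    (hD : Ddiff (m * k) k = {x | ∃ i, 1 ≤ i ∧ i ≤ j + 1 ∧ x = e i}) :
    bNum (m * k) k ≤ m * k - m ∧
      m * k - ∑ i ∈ Finset.range (j + 1), (e (i + 1) - e i) * (m - e (i + 1) + 1) ≤
        bNum (m * k) k := by
  have : NeZero (m * k) := ⟨(Nat.mul_pos hm (by omega)).ne'⟩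
  have hub : ∀ n ∈ {n | ∃ B : Finset (ZMod (m * k)), B.card = n ∧ ∀ A ⊆ B, ¬ IsAP (m * k) k A},
      n ≤ m * k - m := by
    rintro n ⟨B, rfl, hB⟩
    exact card_le_of_apFree m k hm hk B hB
  have hmem : (removed m k j e)ᶜ.card ∈
      {n | ∃ B : Finset (ZMod (m * k)), B.card = n ∧ ∀ A ⊆ B, ¬ IsAP (m * k) k A} := by
    refine ⟨_, rfl, fun A hAB hA => ?_⟩
    obtain ⟨x, hxA, hxr⟩ := removed_hits m k hm hk j e he0 hmono hD A hA
    exact Finset.mem_compl.mp (hAB hxA) hxr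
  refine ⟨csSup_le ⟨_, hmem⟩ hub, le_trans ?_ (le_csSup ⟨_, hub⟩ hmem)⟩
  rw [Finset.card_compl, ZMod.card]
  exact Nat.sub_le_sub_left (card_removed_le m k j e) _
end

section
/- Let m and k be positive integers with k ≥ 3. If k > m, then χ(mk,k) = 2. -/
/-- The first `k` terms of a progression with difference `d` meet, modulo `k`, every residue
congruent to `t` modulo `gcd(d, k)`. -/
lemma exists_index_of_modEq_gcd {k : ℕ} (hk : 0 < k) (d t r : ℕ)
    (h : t ≡ r [MOD Nat.gcd d k]) : ∃ i < k, t + i * d ≡ r [MOD k] := by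
  obtain ⟨s, hs⟩ := h.dvd
  have hb := Nat.gcd_eq_gcd_ab d k
  have hk' : (0 : ℤ) < k := by exact_mod_cast hk
  -- Bézout: `r - t = s * gcd(d, k) ≡ (s * gcdA d k) * d` modulo `k`
  have h0 := Int.emod_nonneg (s * Nat.gcdA d k) hk'.ne'
  have h1 := Int.emod_lt_of_pos (s * Nat.gcdA d k) hk'
  have h2 := Int.emod_add_mul_ediv (s * Nat.gcdA d k) k
  obtain ⟨i, hi⟩ := Int.eq_ofNat_of_zero_le h0
  rw [hi] at h1 h2
  refine ⟨i, by exact_mod_cast h1, ?_⟩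
  rw [Nat.modEq_iff_dvd]
  refine ⟨s * Nat.gcdB d k + d * (s * Nat.gcdA d k / k), ?_⟩
  rw [hb] at hs
  push_cast
  linear_combination hs - d * h2

/-- A progression whose difference is not divisible by `k` visits both halves of `[0, k)`
modulo `k`. -/
lemma exists_low_high {k : ℕ} (hk : 0 < k) (d t : ℕ) (hd : ¬ k ∣ d) :
    (∃ i < k, 2 * ((t + i * d) % k) < k) ∧ (∃ i < k, ¬ 2 * ((t + i * d) % k) < k) := by
  have hg0 : 0 < Nat.gcd d k := Nat.gcd_pos_of_pos_right d hk
  have hgk : Nat.gcd d k ∣ k := Nat.gcd_dvd_right d k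
  have h2g : 2 * Nat.gcd d k ≤ k := by
    obtain ⟨q, hq⟩ := hgk
    have hne : q ≠ 1 := by
      rintro rfl
      exact hd (Nat.gcd_eq_right_iff_dvd.1 (by omega))
    have hq0 : q ≠ 0 := by
      rintro rfl
      omega
    have : Nat.gcd d k * 2 ≤ Nat.gcd d k * q := Nat.mul_le_mul_left _ (by omega)
    omega
  have ha : t % Nat.gcd d k < Nat.gcd d k := Nat.mod_lt _ hg0
  constructor
  · obtain ⟨i, hi, h⟩ := exists_index_of_modEq_gcd hk d t (t % Nat.gcd d k)
      (Nat.mod_modEq _ _).symm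
    refine ⟨i, hi, ?_⟩
    rw [h, Nat.mod_eq_of_lt (by omega)]
    omega
  · obtain ⟨i, hi, h⟩ := exists_index_of_modEq_gcd hk d t
      (t % Nat.gcd d k + (k - Nat.gcd d k)) (by
        have h1 : k - Nat.gcd d k ≡ 0 [MOD Nat.gcd d k] :=
          (Nat.modEq_zero_iff_dvd).2 (Nat.dvd_sub hgk dvd_rfl)
        simpa using ((Nat.mod_modEq t (Nat.gcd d k)).add h1).symm)
    refine ⟨i, hi, ?_⟩
    rw [h, Nat.mod_eq_of_lt (by omega)]
    omega

lemma not_dvd_val_of_isAPWith {m k : ℕ} (hm : 0 < m) (hkm : m < k)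
    {A : Finset (ZMod (m * k))} {d : ZMod (m * k)} (h : IsAPWith (m * k) k A d) :
    ¬ k ∣ d.val := by
  have : NeZero (m * k) := ⟨Nat.mul_ne_zero (by omega) (by omega)⟩
  obtain ⟨hc, t, rfl⟩ := h
  rintro ⟨q, hq⟩
  have hinj := Finset.card_image_iff.1 (hc.trans (Finset.card_range k).symm)
  have hmd : (m : ZMod (m * k)) * d = 0 := by
    rw [← ZMod.natCast_zmod_val d, hq, ← Nat.cast_mul, ← mul_assoc, Nat.cast_mul,
      ZMod.natCast_self, zero_mul]
  have := @hinj m (by simpa using hkm) 0 (by simp; omega) (by simp [hmd])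
  omega

theorem stmt_13 (m k : ℕ) (hm : 0 < m) (hk : 3 ≤ k) (hkm : m < k) :
    chiNum (m * k) k = 2 := by
  have hN : NeZero (m * k) := ⟨by positivity⟩
  have hmem : 2 ∈ {r | ∃ c : ZMod (m * k) → Fin r, ∀ A : Finset (ZMod (m * k)),
      IsAP (m * k) k A → ¬ ∃ i, ∀ x ∈ A, c x = i} := by
    refine ⟨fun x => if 2 * (x.val % k) < k then 0 else 1, ?_⟩
    rintro A ⟨d, hA⟩ ⟨j, hj⟩
    have hd := not_dvd_val_of_isAPWith hm hkm hA
    obtain ⟨-, t, rfl⟩ := hA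
    have hval : ∀ i : ℕ, (t + (i : ZMod (m * k)) * d).val % k = (t.val + i * d.val) % k := by
      intro i
      have : t + (i : ZMod (m * k)) * d = ((t.val + i * d.val : ℕ) : ZMod (m * k)) := by
        simp
      rw [this, ZMod.val_natCast, Nat.mod_mul_left_mod]
    obtain ⟨⟨a, ha, hal⟩, ⟨b, hb, hbh⟩⟩ := exists_low_high (by omega : 0 < k) d.val t.val hd
    have h0 := hj _ (Finset.mem_image_of_mem _ (Finset.mem_range.2 ha))
    have h1 := hj _ (Finset.mem_image_of_mem _ (Finset.mem_range.2 hb))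
    simp only [hval] at h0 h1
    rw [if_pos hal] at h0
    rw [if_neg hbh, ← h0] at h1
    exact absurd h1 (by decide)
  refine le_antisymm (Nat.sInf_le hmem) (le_csInf ⟨2, hmem⟩ ?_)
  rintro r ⟨c, hc⟩
  by_contra! hr
  -- With at most one colour the progression `0, 1, …, k - 1` is monochromatic.
  have hsub : Subsingleton (Fin r) := Fin.subsingleton_iff_le_one.2 (by omega)
  refine hc ((Finset.range k).image (fun i : ℕ => 0 + (i : ZMod (m * k)) * 1))
    ⟨1, ?_, 0, rfl⟩ ⟨c 0, fun x _ => Subsingleton.elim _ _⟩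
  rw [Finset.card_image_of_injOn, Finset.card_range]
  intro a ha b hb hab
  have hkN : k ≤ m * k := Nat.le_mul_of_pos_left k hm
  simp only [Finset.coe_range, Set.mem_Iio] at ha hb
  simp only [zero_add, mul_one] at hab
  have := congrArg ZMod.val hab
  rwa [ZMod.val_natCast_of_lt (by omega), ZMod.val_natCast_of_lt (by omega)] at this
end
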